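/- For every 1 ≤ s ≤ p−1: G_s(E^{p−1}F^{p−1}) = 2(−1)^{p−s−1}([p−1]!)²/[s]². Moreover, for 2 ≤ s ≤ p−2: G_s(E^{p−2}F^{p−2}K) = 2(−1)^{p−s−1} ([p−1]!)²/[s]² · q^{−2}[2]/([s−1][s+1]). (These follow from the action E^{p−1}F^{p−1} b₀ = (−α)^{p−s−1} α^{s−1} ([p−1]!)²/[s]² · a₀ on P^α(s), with E^{p−1}F^{p−1} annihilating all other standard basis vectors.) -/

import Mathlib

noncomputable section

open scoped TensorProduct

namespace Uqsl2

/-- Generators of the restricted quantum group. -/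
inductive gen : Type | E | F | K | Kinv

/-- The primitive `2p`-th root of unity `q = e^{iπ/p}`. -/
def q (p : ℕ) : ℂ := Complex.exp (Real.pi * Complex.I / p)

/-- The `q`-integer `[n] = (q^n - q^{-n})/(q - q^{-1})`. -/
def qi (p : ℕ) (n : ℤ) : ℂ := (q p ^ n - q p ^ (-n)) / (q p - (q p)⁻¹)

/-- The `q`-factorial `[m]!`. -/
def qfact (p m : ℕ) : ℂ := ∏ i ∈ Finset.range m, qi p (i + 1)

open FreeAlgebra in
/-- The defining relations of `Ū_q(sl₂)`. -/
inductive rel (p : ℕ) : FreeAlgebra ℂ gen → FreeAlgebra ℂ gen → Prop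
  | KKinv : rel p (ι ℂ gen.K * ι ℂ gen.Kinv) 1
  | KinvK : rel p (ι ℂ gen.Kinv * ι ℂ gen.K) 1
  | Ep : rel p (ι ℂ gen.E ^ p) 0
  | Fp : rel p (ι ℂ gen.F ^ p) 0
  | K2p : rel p (ι ℂ gen.K ^ (2 * p)) 1
  | KE : rel p (ι ℂ gen.K * ι ℂ gen.E) (q p ^ 2 • (ι ℂ gen.E * ι ℂ gen.K))
  | KF : rel p (ι ℂ gen.K * ι ℂ gen.F) ((q p ^ 2)⁻¹ • (ι ℂ gen.F * ι ℂ gen.K))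
  | EF : rel p (ι ℂ gen.E * ι ℂ gen.F - ι ℂ gen.F * ι ℂ gen.E)
             ((q p - (q p)⁻¹)⁻¹ • (ι ℂ gen.K - ι ℂ gen.Kinv))

/-- The restricted quantum group `Ū_q(sl₂)`, presented by generators and relations. -/
abbrev Uq (p : ℕ) := RingQuot (rel p)

def EE (p : ℕ) : Uq p := RingQuot.mkAlgHom ℂ (rel p) (FreeAlgebra.ι ℂ gen.E)
def FF (p : ℕ) : Uq p := RingQuot.mkAlgHom ℂ (rel p) (FreeAlgebra.ι ℂ gen.F)
def KK (p : ℕ) : Uq p := RingQuot.mkAlgHom ℂ (rel p) (FreeAlgebra.ι ℂ gen.K)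
def KKinv (p : ℕ) : Uq p := RingQuot.mkAlgHom ℂ (rel p) (FreeAlgebra.ι ℂ gen.Kinv)

/-! ### The simple modules `X^α(s)` as matrix representations -/

/-- Matrix of `K` on `X^α(s)` in the canonical basis. -/
def XK (p : ℕ) (α : ℂ) (s : ℕ) : Matrix (Fin s) (Fin s) ℂ :=
  Matrix.diagonal fun i => α * q p ^ ((s : ℤ) - 1 - 2 * (i : ℕ))

/-- Matrix of `E` on `X^α(s)` in the canonical basis. -/
def XE (p : ℕ) (α : ℂ) (s : ℕ) : Matrix (Fin s) (Fin s) ℂ :=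
  Matrix.of fun i j =>
    if (i : ℕ) + 1 = (j : ℕ) then α * qi p (j : ℕ) * qi p ((s : ℤ) - (j : ℕ)) else 0

/-- Matrix of `F` on `X^α(s)` in the canonical basis. -/
def XF (s : ℕ) : Matrix (Fin s) (Fin s) ℂ :=
  Matrix.of fun i j => if (i : ℕ) = (j : ℕ) + 1 then (1 : ℂ) else 0

/-- The statement that `ρX α s` is the representation on `X^α(s)` for the relevant
values of `α` and `s`. -/
def IsXRep (p : ℕ) (ρX : (α : ℂ) → (s : ℕ) → (Uq p →ₐ[ℂ] Matrix (Fin s) (Fin s) ℂ)) : Prop :=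
  ∀ α : ℂ, (α = 1 ∨ α = -1) → ∀ s : ℕ, 1 ≤ s → s ≤ p →
    ρX α s (KK p) = XK p α s ∧ ρX α s (EE p) = XE p α s ∧ ρX α s (FF p) = XF s

/-! ### The projective modules `P^α(s)` as matrix representations -/

/-- Index for the standard basis `(b_i, x_j, y_k, a_l)` of `P^α(s)`. -/
abbrev PIdx (p s : ℕ) := Fin s ⊕ (Fin (p - s) ⊕ (Fin (p - s) ⊕ Fin s))

/-- Diagonal of the matrix of `K` on `P^α(s)`. -/
def PKdiag (p : ℕ) (α : ℂ) (s : ℕ) : PIdx p s → ℂ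
  | .inl i => α * q p ^ ((s : ℤ) - 1 - 2 * (i : ℕ))
  | .inr (.inl j) => -α * q p ^ ((p : ℤ) - s - 1 - 2 * (j : ℕ))
  | .inr (.inr (.inl k)) => -α * q p ^ ((p : ℤ) - s - 1 - 2 * (k : ℕ))
  | .inr (.inr (.inr l)) => α * q p ^ ((s : ℤ) - 1 - 2 * (l : ℕ))

/-- Matrix of `K` on `P^α(s)` in the standard basis. -/
def PK (p : ℕ) (α : ℂ) (s : ℕ) : Matrix (PIdx p s) (PIdx p s) ℂ :=
  Matrix.diagonal (PKdiag p α s)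

/-- Matrix of `E` on `P^α(s)` in the standard basis. -/
def PE (p : ℕ) (α : ℂ) (s : ℕ) : Matrix (PIdx p s) (PIdx p s) ℂ :=
  Matrix.of fun i j =>
    match i, j with
    | .inl i, .inl j =>
        if (i : ℕ) + 1 = (j : ℕ) then α * qi p (j : ℕ) * qi p ((s : ℤ) - (j : ℕ)) else 0
    | .inr (.inl jx), .inl j => if (j : ℕ) = 0 ∧ (jx : ℕ) + 1 = p - s then 1 else 0
    | .inr (.inr (.inr l)), .inl j => if (l : ℕ) + 1 = (j : ℕ) then 1 else 0
    | .inr (.inl i), .inr (.inl j) =>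
        if (i : ℕ) + 1 = (j : ℕ) then -α * qi p (j : ℕ) * qi p ((p : ℤ) - s - (j : ℕ)) else 0
    | .inr (.inr (.inl i)), .inr (.inr (.inl k)) =>
        if (i : ℕ) + 1 = (k : ℕ) then -α * qi p (k : ℕ) * qi p ((p : ℤ) - s - (k : ℕ)) else 0
    | .inr (.inr (.inr l)), .inr (.inr (.inl k)) =>
        if (k : ℕ) = 0 ∧ (l : ℕ) + 1 = s then 1 else 0
    | .inr (.inr (.inr i)), .inr (.inr (.inr l)) =>
        if (i : ℕ) + 1 = (l : ℕ) then α * qi p (l : ℕ) * qi p ((s : ℤ) - (l : ℕ)) else 0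
    | _, _ => 0

/-- Matrix of `F` on `P^α(s)` in the standard basis. -/
def PF (p s : ℕ) : Matrix (PIdx p s) (PIdx p s) ℂ :=
  Matrix.of fun i j =>
    match i, j with
    | .inl i, .inl j => if (i : ℕ) = (j : ℕ) + 1 then (1 : ℂ) else 0
    | .inr (.inr (.inl k)), .inl j => if (j : ℕ) + 1 = s ∧ (k : ℕ) = 0 then 1 else 0
    | .inr (.inl i), .inr (.inl j) => if (i : ℕ) = (j : ℕ) + 1 then 1 else 0
    | .inr (.inr (.inr l)), .inr (.inl j) => if (j : ℕ) + 1 = p - s ∧ (l : ℕ) = 0 then 1 else 0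
    | .inr (.inr (.inl i)), .inr (.inr (.inl k)) => if (i : ℕ) = (k : ℕ) + 1 then 1 else 0
    | .inr (.inr (.inr i)), .inr (.inr (.inr l)) => if (i : ℕ) = (l : ℕ) + 1 then 1 else 0
    | _, _ => 0

/-- The statement that `ρP α s` is the representation on `P^α(s)` for the relevant
values of `α` and `s`. -/
def IsPRep (p : ℕ)
    (ρP : (α : ℂ) → (s : ℕ) → (Uq p →ₐ[ℂ] Matrix (PIdx p s) (PIdx p s) ℂ)) : Prop :=
  ∀ α : ℂ, (α = 1 ∨ α = -1) → ∀ s : ℕ, 1 ≤ s → s ≤ p - 1 →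
    ρP α s (KK p) = PK p α s ∧ ρP α s (EE p) = PE p α s ∧ ρP α s (FF p) = PF p s

/-! ### Symmetric linear forms, characters, and the forms `G_s` -/

/-- Symmetric linear forms. -/
def IsSLF (p : ℕ) (φ : Uq p →ₗ[ℂ] ℂ) : Prop := ∀ x y : Uq p, φ (x * y) = φ (y * x)

/-- The character of a matrix representation. -/
def chiOf (p : ℕ) {n : Type} [Fintype n] [DecidableEq n]
    (ρ : Uq p →ₐ[ℂ] Matrix n n ℂ) : Uq p →ₗ[ℂ] ℂ :=
  (Matrix.traceLinearMap n ℂ ℂ).comp ρ.toLinearMap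

/-- The matrix entry functional. -/
def entry {n : Type} (i j : n) : Matrix n n ℂ →ₗ[ℂ] ℂ where
  toFun M := M i j
  map_add' _ _ := rfl
  map_smul' _ _ := rfl

/-- The symmetric linear form `G_s = tr H^+_s + tr H^-_{p-s}`. -/
def GOf (p : ℕ)
    (ρP : (α : ℂ) → (s : ℕ) → (Uq p →ₐ[ℂ] Matrix (PIdx p s) (PIdx p s) ℂ))
    (s : ℕ) : Uq p →ₗ[ℂ] ℂ :=
  (∑ i : Fin s,
    (entry (Sum.inr (Sum.inr (Sum.inr i))) (Sum.inl i)).comp (ρP 1 s).toLinearMap) +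
  (∑ j : Fin (p - s),
    (entry (Sum.inr (Sum.inr (Sum.inr j))) (Sum.inl j)).comp (ρP (-1) (p - s)).toLinearMap)

/-! ### Convolution product -/

/-- The convolution product of two linear forms, with respect to a comultiplication `Δ`. -/
def conv (p : ℕ) (Δ : Uq p →ₐ[ℂ] (Uq p ⊗[ℂ] Uq p)) (φ ψ : Uq p →ₗ[ℂ] ℂ) :
    Uq p →ₗ[ℂ] ℂ :=
  (LinearMap.mul' ℂ ℂ).comp ((TensorProduct.map φ ψ).comp Δ.toLinearMap)

/-- The statement that `Δ` is the comultiplication of `Ū_q(sl₂)`. -/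
def IsCoprod (p : ℕ) (Δ : Uq p →ₐ[ℂ] (Uq p ⊗[ℂ] Uq p)) : Prop :=
  Δ (EE p) = 1 ⊗ₜ[ℂ] EE p + EE p ⊗ₜ[ℂ] KK p ∧
  Δ (FF p) = FF p ⊗ₜ[ℂ] 1 + KKinv p ⊗ₜ[ℂ] FF p ∧
  Δ (KK p) = KK p ⊗ₜ[ℂ] KK p ∧
  Δ (KKinv p) = KKinv p ⊗ₜ[ℂ] KKinv p

/-! The vectors `b_0, …, b_{s-1}, y_0, …, y_{p-s-1}` form a single `F`-chain of length `p`, and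
`E` runs down the chain `a_0, …, a_{s-1}, y_0, …, y_{p-s-1}`, whose upper part it shares. In the
second chain the step from `m` to `m - 1` has the uniform coefficient `α[m][s-m]`, except that its
zero at `m = s` is replaced by `1`. For `n ≥ s`, therefore, `E^n F^n b_i` is either `0` or the
product of these coefficients over `i < m ≤ i + n` times `a_i`: one diagonal entry of `H^α_s`
survives for `n = p - 1` and two survive for `n = p - 2`. -/

section QIntegers

variable {p : ℕ}

theorem q_ne_zero (p : ℕ) : q p ≠ 0 := Complex.exp_ne_zero _

theorem isPrimitiveRoot_q (hp : p ≠ 0) : IsPrimitiveRoot (q p) (2 * p) := by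
  have hq : q p = Complex.exp (2 * Real.pi * Complex.I / ((2 * p : ℕ) : ℂ)) := by
    rw [q, Nat.cast_mul, Nat.cast_ofNat, mul_assoc, mul_div_mul_left _ _ two_ne_zero]
  exact hq ▸ Complex.isPrimitiveRoot_exp (2 * p) (by lia)

theorem q_zpow_self (hp : p ≠ 0) : q p ^ (p : ℤ) = -1 := by
  rw [q, zpow_natCast, ← Complex.exp_nat_mul, mul_div_cancel₀ _ (Nat.cast_ne_zero.mpr hp),
    Complex.exp_pi_mul_I]

theorem q_zpow_sub_zpow_neg_eq_zero_iff (hp : p ≠ 0) (n : ℤ) :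
    q p ^ n - q p ^ (-n) = 0 ↔ (p : ℤ) ∣ n := by
  rw [sub_eq_zero, zpow_neg, ← mul_eq_one_iff_eq_inv₀ (zpow_ne_zero n (q_ne_zero p)),
    ← zpow_add₀ (q_ne_zero p), ← two_mul, (isPrimitiveRoot_q hp).zpow_eq_one_iff_dvd,
    Nat.cast_mul, Nat.cast_ofNat, mul_dvd_mul_iff_left two_ne_zero]

theorem q_sub_inv_ne_zero (hp : 2 ≤ p) : q p - (q p)⁻¹ ≠ 0 := by
  have h := (q_zpow_sub_zpow_neg_eq_zero_iff (show p ≠ 0 by lia) 1).not.mpr fun hdvd =>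
    absurd (Int.le_of_dvd one_pos hdvd) (by lia)
  simpa only [zpow_one, zpow_neg] using h

theorem qi_ne_zero {n : ℤ} (hn : 0 < n) (hnp : n < p) : qi p n ≠ 0 :=
  div_ne_zero
    ((q_zpow_sub_zpow_neg_eq_zero_iff (by lia) n).not.mpr fun hdvd =>
      absurd (Int.le_of_dvd hn hdvd) (by lia))
    (q_sub_inv_ne_zero (by lia))

theorem qi_one (hp : 2 ≤ p) : qi p 1 = 1 := by
  rw [qi, zpow_one, zpow_neg, zpow_one, div_self (q_sub_inv_ne_zero hp)]

theorem qi_neg (p : ℕ) (n : ℤ) : qi p (-n) = -qi p n := by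
  rw [qi, qi, neg_neg, ← neg_div, neg_sub]

theorem qi_natCast_sub (hp : p ≠ 0) (n : ℤ) : qi p (p - n) = qi p n := by
  have hq := q_ne_zero p
  rw [qi, qi, neg_sub, zpow_sub₀ hq, zpow_sub₀ hq, q_zpow_self hp, zpow_neg]
  congr 1
  field_simp
  ring

theorem q_zpow_mul_qi_sub (p : ℕ) (n : ℤ) :
    q p ^ (n - 3) * qi p (n + 1) - q p ^ (n - 1) * qi p (n - 1) = q p ^ (-2 : ℤ) * qi p 2 := by
  simp only [qi, mul_div_assoc', ← sub_div, mul_sub, ← zpow_add₀ (q_ne_zero p)]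
  ring_nf

theorem qfact_succ (p n : ℕ) : qfact p (n + 1) = qfact p n * qi p (n + 1) :=
  Finset.prod_range_succ _ n

theorem prod_range_qi_sub (p n : ℕ) : ∏ j ∈ Finset.range n, qi p (n - j) = qfact p n := by
  rw [qfact, ← Finset.prod_range_reflect]
  refine Finset.prod_congr rfl fun j hj => congrArg (qi p) ?_
  have := Finset.mem_range.mp hj
  lia

theorem prod_range_mul_qi_mul_qi_sub (p n : ℕ) (c : ℂ) :
    ∏ j ∈ Finset.range n, c * qi p (j + 1) * qi p (n - j) = c ^ n * qfact p n ^ 2 := by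
  rw [Finset.prod_mul_distrib, Finset.prod_mul_distrib, Finset.prod_const, Finset.card_range,
    prod_range_qi_sub, ← qfact, mul_assoc, sq]

theorem qfact_mul_prod_qi_add (p m n : ℕ) :
    qfact p m * ∏ j ∈ Finset.range n, qi p (m + j + 1) = qfact p (m + n) := by
  simp only [qfact, Finset.prod_range_add, Nat.cast_add]

theorem qfact_pred {s : ℕ} (hs : 0 < s) (hsp : s < p) :
    qfact p (p - 1) = qfact p (s - 1) * qi p s * qfact p (p - s - 1) := by
  obtain ⟨t, rfl⟩ := Nat.exists_eq_add_of_le' hs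
  obtain ⟨r, rfl⟩ := Nat.exists_eq_add_of_lt hsp
  rw [show t + 1 + r + 1 - 1 = t + 1 + r by lia, show t + 1 + r + 1 - (t + 1) - 1 = r by lia,
    ← qfact_mul_prod_qi_add, qfact_succ, ← prod_range_qi_sub _ r, Nat.add_sub_cancel]
  push_cast
  congr 1
  refine Finset.prod_congr rfl fun j _ => ?_
  rw [← qi_natCast_sub (by lia)]
  congr 1
  push_cast
  ring

end QIntegers

section Chains

open scoped Matrix

variable {p s : ℕ}

/-- The `F`-chain `b_0, …, b_{s-1}, y_0, …, y_{p-s-1}` of `P^α(s)`, extended by zero to all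
indices. -/
def fChain (p s n : ℕ) : PIdx p s → ℂ :=
  if hs : n < s then Pi.single (.inl ⟨n, hs⟩) 1
  else if hp : n < p then Pi.single (.inr (.inr (.inl ⟨n - s, by lia⟩))) 1
  else 0

/-- The chain `a_0, …, a_{s-1}, y_0, …, y_{p-s-1}` of `P^α(s)`, extended by zero to all indices;
`E` maps each member to a multiple of the preceding one. -/
def eChain (p s n : ℕ) : PIdx p s → ℂ :=
  if hs : n < s then Pi.single (.inr (.inr (.inr ⟨n, hs⟩))) 1
  else if hp : n < p then Pi.single (.inr (.inr (.inl ⟨n - s, by lia⟩))) 1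
  else 0

/-- The coefficient of `eChain p s (m - 1)` in the image of `eChain p s m` under `E`. -/
def eCoeff (p : ℕ) (α : ℂ) (s m : ℕ) : ℂ :=
  if m = s then 1 else α * qi p m * qi p (s - m)

theorem fChain_eq_eChain {n : ℕ} (hn : s ≤ n) : fChain p s n = eChain p s n := by
  rw [fChain, eChain, dif_neg hn.not_gt, dif_neg hn.not_gt]

theorem eChain_eq_zero {n : ℕ} (hs : s ≤ n) (hp : p ≤ n) : eChain p s n = 0 := by
  rw [eChain, dif_neg hs.not_gt, dif_neg hp.not_gt]

theorem PF_mulVec_fChain (p s n : ℕ) : PF p s *ᵥ fChain p s n = fChain p s (n + 1) := by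
  unfold fChain
  split_ifs <;> simp only [Matrix.mulVec_single_one, Matrix.mulVec_zero]
  all_goals
    ext (i | i | i | i) <;>
      simp only [PF, Matrix.col_apply, Matrix.of_apply, Pi.single_apply, Pi.zero_apply,
        Sum.inl.injEq, Sum.inr.injEq, reduceCtorEq, if_false, Fin.ext_iff] <;>
      grind

theorem PF_pow_mulVec_fChain (p s n i : ℕ) :
    PF p s ^ n *ᵥ fChain p s i = fChain p s (i + n) := by
  induction n with
  | zero => simp only [pow_zero, Matrix.one_mulVec, add_zero]
  | succ n ih => rw [pow_succ', ← Matrix.mulVec_mulVec, ih, PF_mulVec_fChain, add_assoc]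

theorem eCoeff_of_lt (hp : p ≠ 0) (α : ℂ) {m : ℕ} (hm : s < m) :
    eCoeff p α s m = -α * qi p (m - s) * qi p (p - m) := by
  rw [eCoeff, if_neg hm.ne', qi_natCast_sub hp, ← neg_sub, qi_neg]
  ring

theorem PE_mulVec_eChain (α : ℂ) {m : ℕ} (hm : m + 1 < p) :
    PE p α s *ᵥ eChain p s (m + 1) = eCoeff p α s (m + 1) • eChain p s m := by
  rcases lt_trichotomy (m + 1) s with hs | hs | hs
  · rw [eCoeff, if_neg hs.ne, eChain, eChain, dif_pos hs, dif_pos (m.lt_succ_self.trans hs),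
      Matrix.mulVec_single_one]
    ext (i | i | i | i) <;> simp [PE, Pi.single_apply, Fin.ext_iff]
  · rw [eCoeff, if_pos hs, one_smul, eChain, eChain, dif_neg hs.not_lt, dif_pos hm,
      dif_pos (hs ▸ m.lt_succ_self), Matrix.mulVec_single_one]
    ext (i | i | i | i) <;>
      simp only [PE, Matrix.col_apply, Matrix.of_apply, Pi.single_apply, Sum.inr.injEq,
        reduceCtorEq, if_false, Fin.ext_iff] <;>
      grind
  · have hcoeff : eCoeff p α s (m + 1) =
        -α * qi p (m + 1 - s : ℕ) * qi p ((p : ℤ) - s - (m + 1 - s : ℕ)) := by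
      rw [eCoeff_of_lt (by lia) α hs, Nat.cast_sub hs.le, sub_sub_sub_cancel_right]
    rw [hcoeff, eChain, eChain, dif_neg hs.not_gt, dif_pos hm, dif_neg (by lia),
      dif_pos (m.lt_succ_self.trans hm), Matrix.mulVec_single_one]
    ext (i | i | i | i) <;>
      simp only [PE, Matrix.col_apply, Matrix.of_apply, Pi.smul_apply, Pi.single_apply,
        smul_eq_mul, Sum.inl.injEq, Sum.inr.injEq, reduceCtorEq, if_false, Fin.ext_iff] <;>
      grind

theorem PE_pow_mulVec_eChain (α : ℂ) {n i : ℕ} (h : i + n < p) :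
    PE p α s ^ n *ᵥ eChain p s (i + n) =
      (∏ j ∈ Finset.range n, eCoeff p α s (i + j + 1)) • eChain p s i := by
  induction n with
  | zero => simp only [pow_zero, Matrix.one_mulVec, add_zero, Finset.prod_range_zero, one_smul]
  | succ n ih =>
    rw [pow_succ, ← Matrix.mulVec_mulVec, ← add_assoc,
      PE_mulVec_eChain α (show i + n + 1 < p from h), Matrix.mulVec_smul, ih (by lia), smul_smul,
      Finset.prod_range_succ, mul_comm]

theorem PE_pow_mul_PF_pow_mulVec_fChain (α : ℂ) {n i : ℕ} (hs : s ≤ i + n) :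
    (PE p α s ^ n * PF p s ^ n) *ᵥ fChain p s i =
      if i + n < p then (∏ j ∈ Finset.range n, eCoeff p α s (i + j + 1)) • eChain p s i
      else 0 := by
  rw [← Matrix.mulVec_mulVec, PF_pow_mulVec_fChain, fChain_eq_eChain hs]
  split_ifs with hp
  · exact PE_pow_mulVec_eChain α hp
  · rw [eChain_eq_zero hs (not_lt.mp hp), Matrix.mulVec_zero]

end Chains

section EntryBlock

variable {p s : ℕ}

/-- The block `H^α_s` of the matrix of an endomorphism of `P^α(s)`: the entry `(l, i)` is the
coefficient of `a_l` in the image of `b_i`. -/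
def hBlock (M : Matrix (PIdx p s) (PIdx p s) ℂ) : Matrix (Fin s) (Fin s) ℂ :=
  M.submatrix (fun l => .inr (.inr (.inr l))) .inl

theorem hBlock_PE_pow_mul_PF_pow_apply_self (α : ℂ) {n : ℕ} (hn : s ≤ n) (i : Fin s) :
    hBlock (PE p α s ^ n * PF p s ^ n) i i =
      if (i : ℕ) + n < p then ∏ j ∈ Finset.range n, eCoeff p α s (i + j + 1) else 0 := by
  have h := congrFun (PE_pow_mul_PF_pow_mulVec_fChain (p := p) α (hn.trans (Nat.le_add_left n i)))
    (.inr (.inr (.inr i)))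
  rw [fChain, dif_pos i.isLt, Matrix.mulVec_single_one] at h
  refine h.trans ?_
  rw [eChain, dif_pos i.isLt]
  split_ifs <;> simp

theorem hBlock_mul_PK_pow_apply (M : Matrix (PIdx p s) (PIdx p s) ℂ) (α : ℂ) (r : ℕ)
    (l i : Fin s) :
    hBlock (M * PK p α s ^ r) l i = hBlock M l i * (α * q p ^ ((s : ℤ) - 1 - 2 * (i : ℕ))) ^ r := by
  rw [PK, Matrix.diagonal_pow, hBlock, Matrix.submatrix_apply, Matrix.mul_diagonal]
  rfl

theorem trace_hBlock_PE_pow_mul_PF_pow_mul_PK_pow (α : ℂ) {n : ℕ} (r : ℕ) (hn : s ≤ n)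
    (hp : p ≤ n + s) :
    (hBlock (PE p α s ^ n * PF p s ^ n * PK p α s ^ r)).trace =
      ∑ i ∈ Finset.range (p - n), (∏ j ∈ Finset.range n, eCoeff p α s (i + j + 1)) *
        (α * q p ^ ((s : ℤ) - 1 - 2 * i)) ^ r := by
  set f : ℕ → ℂ := fun i => (∏ j ∈ Finset.range n, eCoeff p α s (i + j + 1)) *
    (α * q p ^ ((s : ℤ) - 1 - 2 * i)) ^ r
  have hdiag (i : Fin s) : (hBlock (PE p α s ^ n * PF p s ^ n * PK p α s ^ r)) i i =
      if (i : ℕ) < p - n then f i else 0 := by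
    simp only [hBlock_mul_PK_pow_apply, hBlock_PE_pow_mul_PF_pow_apply_self α hn, ite_mul, zero_mul,
      Nat.lt_sub_iff_add_lt, f]
  simp only [Matrix.trace, Matrix.diag_apply, hdiag]
  rw [Fin.sum_univ_eq_sum_range (fun i => if i < p - n then f i else 0) s, ← Finset.sum_filter]
  congr 1
  ext i
  simp only [Finset.mem_filter, Finset.mem_range]
  lia

theorem prod_eCoeff (α : ℂ) (hs : 0 < s) (hsp : s < p) :
    ∏ j ∈ Finset.range (p - 1), eCoeff p α s (j + 1) =
      α ^ (s - 1) * (-α) ^ (p - s - 1) * (qfact p (p - 1) / qi p s) ^ 2 := by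
  have hqi : qi p s ≠ 0 := qi_ne_zero (by lia) (by lia)
  have hlower : ∏ j ∈ Finset.range (s - 1), eCoeff p α s (j + 1) =
      α ^ (s - 1) * qfact p (s - 1) ^ 2 := by
    rw [← prod_range_mul_qi_mul_qi_sub]
    refine Finset.prod_congr rfl fun j hj => ?_
    have := Finset.mem_range.mp hj
    rw [eCoeff, if_neg (by lia), Nat.cast_succ, Nat.cast_pred hs, sub_add_eq_sub_sub_swap]
  have hupper : ∏ j ∈ Finset.range (p - s - 1), eCoeff p α s (s + j + 1) =
      (-α) ^ (p - s - 1) * qfact p (p - s - 1) ^ 2 := by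
    rw [← prod_range_mul_qi_mul_qi_sub]
    refine Finset.prod_congr rfl fun j hj => ?_
    have := Finset.mem_range.mp hj
    rw [eCoeff_of_lt (by lia) α (by lia), show ((s + j + 1 : ℕ) : ℤ) - s = j + 1 by lia,
      show (p : ℤ) - (s + j + 1 : ℕ) = (p - s - 1 : ℕ) - j by lia]
  have hsplit : p - 1 = s - 1 + 1 + (p - s - 1) := by lia
  calc ∏ j ∈ Finset.range (p - 1), eCoeff p α s (j + 1)
      = (∏ j ∈ Finset.range (s - 1), eCoeff p α s (j + 1)) * 1 *
          ∏ j ∈ Finset.range (p - s - 1), eCoeff p α s (s + j + 1) := by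
        rw [hsplit, Finset.prod_range_add, Finset.prod_range_succ, Nat.sub_add_cancel hs,
          eCoeff, if_pos rfl]
    _ = _ := by
        rw [hlower, hupper, qfact_pred hs hsp]
        field_simp

theorem eCoeff_one (α : ℂ) (hp : 2 ≤ p) (hs : s ≠ 1) : eCoeff p α s 1 = α * qi p (s - 1) := by
  rw [eCoeff, if_neg hs.symm, Nat.cast_one, qi_one hp, mul_one]

theorem eCoeff_pred (α : ℂ) (hp : 2 ≤ p) (hs : s + 1 ≠ p) :
    eCoeff p α s (p - 1) = -α * qi p (s + 1) := by
  have hp0 : p ≠ 0 := by lia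
  rw [eCoeff, if_neg (by lia), Nat.cast_pred (by lia), qi_natCast_sub hp0, qi_one hp,
    show (s : ℤ) - (p - 1) = -(p - (s + 1)) by ring, qi_neg, qi_natCast_sub hp0]
  ring

theorem prod_eCoeff_eq_mul_qi_add_one (α : ℂ) (hp : 2 ≤ p) (hs : s + 1 ≠ p) :
    ∏ j ∈ Finset.range (p - 1), eCoeff p α s (j + 1) =
      (∏ j ∈ Finset.range (p - 2), eCoeff p α s (j + 1)) * (-α * qi p (s + 1)) := by
  have hpred : p - 1 = p - 2 + 1 := by lia
  rw [hpred, Finset.prod_range_succ, ← hpred, eCoeff_pred α hp hs]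

theorem prod_eCoeff_eq_mul_qi_sub_one (α : ℂ) (hp : 2 ≤ p) (hs : s ≠ 1) :
    ∏ j ∈ Finset.range (p - 1), eCoeff p α s (j + 1) =
      (∏ j ∈ Finset.range (p - 2), eCoeff p α s (1 + j + 1)) * (α * qi p (s - 1)) := by
  rw [show p - 1 = p - 2 + 1 by lia, Finset.prod_range_succ', zero_add, eCoeff_one α hp hs]
  simp only [add_comm 1]

theorem trace_hBlock_pow_pred (α : ℂ) (hs : 0 < s) (hsp : s < p) :
    (hBlock (PE p α s ^ (p - 1) * PF p s ^ (p - 1))).trace =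
      α ^ (s - 1) * (-α) ^ (p - s - 1) * (qfact p (p - 1) / qi p s) ^ 2 := by
  have h := trace_hBlock_PE_pow_mul_PF_pow_mul_PK_pow α 0 (Nat.le_pred_of_lt hsp)
    (show p ≤ p - 1 + s by lia)
  rw [← prod_eCoeff α hs hsp]
  simpa [show p - (p - 1) = 1 by lia] using h

theorem trace_hBlock_pow_sub_two_mul_PK (α : ℂ) (hs : 2 ≤ s) (hsp : s + 2 ≤ p) :
    (hBlock (PE p α s ^ (p - 2) * PF p s ^ (p - 2) * PK p α s)).trace =
      α ^ (s - 1) * (-α) ^ (p - s - 1) * (qfact p (p - 1) / qi p s) ^ 2 *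
        (q p ^ (-2 : ℤ) * qi p 2 / (qi p (s - 1) * qi p (s + 1))) := by
  have hsub : qi p (s - 1) ≠ 0 := qi_ne_zero (by lia) (by lia)
  have hadd : qi p (s + 1) ≠ 0 := qi_ne_zero (by lia) (by lia)
  have h₀ := prod_eCoeff_eq_mul_qi_add_one (p := p) (s := s) α (by lia) (by lia)
  have h₁ := prod_eCoeff_eq_mul_qi_sub_one (p := p) (s := s) α (by lia) (by lia)
  have hW := prod_eCoeff (p := p) (s := s) α (by lia) (by lia)
  set W := ∏ j ∈ Finset.range (p - 1), eCoeff p α s (j + 1)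
  set W₀ := ∏ j ∈ Finset.range (p - 2), eCoeff p α s (j + 1)
  set W₁ := ∏ j ∈ Finset.range (p - 2), eCoeff p α s (1 + j + 1)
  have htrace : (hBlock (PE p α s ^ (p - 2) * PF p s ^ (p - 2) * PK p α s)).trace =
      W₀ * (α * q p ^ ((s : ℤ) - 1)) + W₁ * (α * q p ^ ((s : ℤ) - 3)) := by
    have h := trace_hBlock_PE_pow_mul_PF_pow_mul_PK_pow (p := p) (n := p - 2) α 1
      (show s ≤ p - 2 by lia) (by lia)
    rw [show p - (p - 2) = 2 by lia, Finset.sum_range_succ, Finset.sum_range_one] at h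
    simp only [pow_one] at h
    rw [h]
    simp [W₀, W₁, sub_sub]
  calc _ = W₀ * (α * q p ^ ((s : ℤ) - 1)) + W₁ * (α * q p ^ ((s : ℤ) - 3)) := htrace
    _ = W * ((q p ^ ((s : ℤ) - 3) * qi p (s + 1) - q p ^ ((s : ℤ) - 1) * qi p (s - 1)) /
          (qi p (s - 1) * qi p (s + 1))) := by
      rw [sub_div, mul_sub, mul_div_mul_right _ _ hadd, mul_comm (qi p (s - 1)),
        mul_div_mul_right _ _ hsub]
      nth_rw 1 [h₁]
      rw [h₀]
      field_simp
      ring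
    _ = _ := by rw [q_zpow_mul_qi_sub, hW]

end EntryBlock

section Forms

variable {p s : ℕ} {ρP : (α : ℂ) → (s : ℕ) → (Uq p →ₐ[ℂ] Matrix (PIdx p s) (PIdx p s) ℂ)}

theorem GOf_apply (u : Uq p) :
    GOf p ρP s u = (hBlock (ρP 1 s u)).trace + (hBlock (ρP (-1) (p - s) u)).trace := by
  simp only [GOf, LinearMap.add_apply, LinearMap.sum_apply, LinearMap.comp_apply]
  rfl

theorem GOf_pow_mul_pow_mul_pow (hP : IsPRep p ρP) (hs : 1 ≤ s) (hsp : s ≤ p - 1) (m n r : ℕ) :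
    GOf p ρP s (EE p ^ m * FF p ^ n * KK p ^ r) =
      (hBlock (PE p 1 s ^ m * PF p s ^ n * PK p 1 s ^ r)).trace +
      (hBlock (PE p (-1) (p - s) ^ m * PF p (p - s) ^ n * PK p (-1) (p - s) ^ r)).trace := by
  obtain ⟨hK, hE, hF⟩ := hP 1 (Or.inl rfl) s hs hsp
  obtain ⟨hK', hE', hF'⟩ := hP (-1) (Or.inr rfl) (p - s) (by lia) (by lia)
  simp only [GOf_apply, map_mul, map_pow, hK, hE, hF, hK', hE', hF']

end Forms

/-- `G_s(E^{p-1}F^{p-1}) = 2(-1)^{p-s-1}([p-1]!)²/[s]²` for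
`1 ≤ s ≤ p-1`, and
`G_s(E^{p-2}F^{p-2}K) = 2(-1)^{p-s-1}([p-1]!)²/[s]² · q^{-2}[2]/([s-1][s+1])` for
`2 ≤ s ≤ p-2`. -/
theorem statement_19 (p : ℕ) (hp : 2 ≤ p)
    (ρP : (α : ℂ) → (s : ℕ) → (Uq p →ₐ[ℂ] Matrix (PIdx p s) (PIdx p s) ℂ))
    (hP : IsPRep p ρP) :
    (∀ s : ℕ, 1 ≤ s → s ≤ p - 1 →
      GOf p ρP s (EE p ^ (p - 1) * FF p ^ (p - 1)) =
        2 * (-1 : ℂ) ^ (p - s - 1) * (qfact p (p - 1)) ^ 2 / (qi p s) ^ 2)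
    ∧ (∀ s : ℕ, 2 ≤ s → s ≤ p - 2 →
        GOf p ρP s (EE p ^ (p - 2) * FF p ^ (p - 2) * KK p) =
          2 * (-1 : ℂ) ^ (p - s - 1) * (qfact p (p - 1)) ^ 2 / (qi p s) ^ 2
            * (q p ^ (-2 : ℤ) * qi p 2 / (qi p ((s : ℤ) - 1) * qi p ((s : ℤ) + 1)))) := by
  refine ⟨fun s hs hsp => ?_, fun s hs hsp => ?_⟩
  · have hG := GOf_pow_mul_pow_mul_pow hP hs hsp (p - 1) (p - 1) 0
    simp only [pow_zero, mul_one] at hG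
    rw [hG, trace_hBlock_pow_pred _ (by lia) (by lia),
      trace_hBlock_pow_pred _ (by lia) (by lia), Nat.cast_sub (by lia), qi_natCast_sub (by lia),
      tsub_tsub_cancel_of_le (by lia)]
    simp only [one_pow, neg_neg]
    ring
  · have hp0 : p ≠ 0 := by lia
    have hG := GOf_pow_mul_pow_mul_pow hP (by lia) (by lia) (p - 2) (p - 2) 1 (s := s)
    simp only [pow_one] at hG
    rw [hG, trace_hBlock_pow_sub_two_mul_PK _ hs (by lia),
      trace_hBlock_pow_sub_two_mul_PK _ (by lia) (by lia), Nat.cast_sub (by lia),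
      sub_sub (p : ℤ), sub_add (p : ℤ), qi_natCast_sub hp0, qi_natCast_sub hp0,
      qi_natCast_sub hp0, mul_comm (qi p (s + 1))]
    simp only [one_pow, neg_neg]
    ring

end Uqsl2
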